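/- arXiv:0905.2245 — 2 statements merged into one kernel-verified Lean document; each statement's English description precedes it below -/
import Mathlib

section
/- Let R be a basic left Harada algebra with modules P_{ij} := rad^{j-1}(e_{i1}R) as below. If a submodule N of P_{i1} is not contained in rad(P_{i n_i}), then N = P_{ij} for some 1 ≤ j ≤ n_i. -/
/-!
Common setup.  `K` is an algebraically closed field and `R` a finite-dimensional associative
unital `K`-algebra.  Right `R`-modules are formalized as modules over the opposite ring `Rᵐᵒᵖ`
(so that `MulOpposite.op r • x = x * r`).
-/

open MulOpposite

/-- The right ideal `xR` of a ring `R`, as a submodule of `R` over `Rᵐᵒᵖ`. -/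
def rightIdeal (R : Type) [Ring R] (x : R) : Submodule Rᵐᵒᵖ R :=
  Submodule.span Rᵐᵒᵖ {x}

/-- The Jacobson radical of a submodule `N` (the intersection of the maximal submodules of the
module `N`), viewed as a submodule of the ambient module.  Iterating this operation gives the
iterated radicals `rad^k`. -/
def radSub {A M : Type} [Ring A] [AddCommGroup M] [Module A M] (N : Submodule A M) :
    Submodule A M :=
  Submodule.map N.subtype (sInf {P : Submodule A ↥N | IsCoatom P})

/-- A module is indecomposable if it is nonzero and admits no nontrivial direct sum
decomposition. -/
def IsIndecomposableMod (A M : Type) [Ring A] [AddCommGroup M] [Module A M] : Prop :=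
  Nontrivial M ∧ ∀ N N' : Submodule A M, IsCompl N N' → N = ⊥ ∨ N' = ⊥

/-- A module has projective dimension at most one iff it admits a surjection from a projective
module with projective kernel. -/
def PdLeOne (A : Type) [Ring A] (M : Type) [AddCommGroup M] [Module A M] : Prop :=
  ∃ (P : ModuleCat.{0} A) (f : ↥P →ₗ[A] M),
    Module.Projective A ↥P ∧ Function.Surjective f ∧
      Module.Projective A ↥(LinearMap.ker f)

/-- `Ext¹_A(M,N) = 0`, expressed by the splitting of every short exact sequence
`0 → N → E → M → 0`. -/
def Ext1Zero (A : Type) [Ring A] (M N : Type) [AddCommGroup M] [Module A M]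
    [AddCommGroup N] [Module A N] : Prop :=
  ∀ (E : ModuleCat.{0} A) (i : N →ₗ[A] ↥E) (p : ↥E →ₗ[A] M),
    Function.Injective i → Function.Surjective p → LinearMap.range i = LinearMap.ker p →
    ∃ s : M →ₗ[A] ↥E, p.comp s = LinearMap.id

/-- `X ∈ add T` : `X` is a direct summand of a finite direct sum of copies of `T`. -/
def InAdd (A : Type) [Ring A] (T X : Type) [AddCommGroup T] [Module A T]
    [AddCommGroup X] [Module A X] : Prop :=
  ∃ (k : ℕ) (f : X →ₗ[A] (Fin k → T)) (g : (Fin k → T) →ₗ[A] X),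
    g.comp f = LinearMap.id

/-- `T` is a (finitely generated) tilting right `R`-module: projective dimension at most one,
no self-extensions, and there is a short exact sequence `0 → R → T₀ → T₁ → 0` with
`T₀, T₁ ∈ add T`. -/
def IsTiltingRight (R : Type) [Ring R] (T : Type) [AddCommGroup T] [Module Rᵐᵒᵖ T] : Prop :=
  Module.Finite Rᵐᵒᵖ T ∧ PdLeOne Rᵐᵒᵖ T ∧ Ext1Zero Rᵐᵒᵖ T T ∧
    ∃ (T₀ T₁ : ModuleCat.{0} Rᵐᵒᵖ) (f : R →ₗ[Rᵐᵒᵖ] ↥T₀) (g : ↥T₀ →ₗ[Rᵐᵒᵖ] ↥T₁),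
      InAdd Rᵐᵒᵖ T ↥T₀ ∧ InAdd Rᵐᵒᵖ T ↥T₁ ∧
        Function.Injective f ∧ Function.Surjective g ∧ LinearMap.range f = LinearMap.ker g

/-- `T` is basic: it is an (internal) direct sum of pairwise non-isomorphic indecomposable
submodules. -/
def IsBasicMod (A : Type) [Ring A] (T : Type) [AddCommGroup T] [Module A T] : Prop :=
  ∃ (k : ℕ) (N : Fin k → Submodule A T),
    DirectSum.IsInternal N ∧ (∀ a, IsIndecomposableMod A ↥(N a)) ∧
      ∀ a b, a ≠ b → IsEmpty (↥(N a) ≃ₗ[A] ↥(N b))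

/-- The setoid identifying isomorphic modules (among those with property `P`). -/
def isoSetoid (A : Type) [Ring A] (P : ModuleCat.{0} A → Prop) :
    Setoid {M : ModuleCat.{0} A // P M} where
  r M N := Nonempty (↥M.1 ≃ₗ[A] ↥N.1)
  iseqv := ⟨fun M => ⟨LinearEquiv.refl A ↥M.1⟩, fun ⟨e⟩ => ⟨e.symm⟩,
    fun ⟨e⟩ ⟨f⟩ => ⟨e.trans f⟩⟩

/-- The data exhibiting a ring `R` as a basic left Harada algebra:
a complete set `{e i j}` of orthogonal primitive idempotents with pairwise non-isomorphic
right ideals `(e i j)R` (`R` is basic), such that each `(e i 0)R` is an injective right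
module, and `(e i j)R ≅ rad ((e i (j-1))R)` for `j ≥ 1`.  (Indices are shifted by one from
the paper: the paper's `e_{ij}` is `e i (j-1)` here.) -/
structure HaradaData (R : Type) [Ring R] : Type where
  m : ℕ
  hm : 0 < m
  n : Fin m → ℕ
  hn : ∀ i, 0 < n i
  e : (i : Fin m) → Fin (n i) → R
  idem : ∀ i j, IsIdempotentElem (e i j)
  orth : ∀ p q : Σ i : Fin m, Fin (n i), p ≠ q → e p.1 p.2 * e q.1 q.2 = 0
  sum_eq_one : ∑ p : Σ i : Fin m, Fin (n i), e p.1 p.2 = 1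
  indec : ∀ i j, IsIndecomposableMod Rᵐᵒᵖ ↥(rightIdeal R (e i j))
  basic : ∀ p q : Σ i : Fin m, Fin (n i), p ≠ q →
    IsEmpty (↥(rightIdeal R (e p.1 p.2)) ≃ₗ[Rᵐᵒᵖ] ↥(rightIdeal R (e q.1 q.2)))
  inj : ∀ i, Module.Injective Rᵐᵒᵖ ↥(rightIdeal R (e i ⟨0, hn i⟩))
  rad_iso : ∀ (i : Fin m) (j : Fin (n i)), 0 < j.val →
    Nonempty (↥(rightIdeal R (e i j)) ≃ₗ[Rᵐᵒᵖ]
      ↥(radSub (rightIdeal R (e i ⟨j.val - 1, Nat.lt_of_le_of_lt (Nat.sub_le j.val 1) j.isLt⟩))))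

variable {R : Type} [Ring R]

/-- `H.P i j = rad^j ((e i 0)R)`; this is the paper's `P_{i,j+1} = rad^j (e_{i1}R)`,
a submodule of `R`. -/
def HaradaData.P (H : HaradaData R) (i : Fin H.m) (j : Fin (H.n i)) : Submodule Rᵐᵒᵖ R :=
  radSub^[j.val] (rightIdeal R (H.e i ⟨0, H.hn i⟩))

/-- The quotient module `P_{ik}/P_{il}` (for `l ≥ k` we have `H.P i l ≤ H.P i k`). -/
abbrev HaradaData.Quot (H : HaradaData R) (i : Fin H.m) (k l : Fin (H.n i)) : Type :=
  ↥(H.P i k) ⧸ Submodule.comap (H.P i k).subtype (H.P i l)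

/-- The last index (the paper's `n_i`) in `Fin (H.n i)`. -/
def HaradaData.last (H : HaradaData R) (i : Fin H.m) : Fin (H.n i) :=
  ⟨H.n i - 1, Nat.sub_lt (H.hn i) one_pos⟩

/-- The right ideal `I = ⊕_{i,j} rad^{n_i - j + 1}(e_{ij}R)` of the paper. -/
def HaradaData.I (H : HaradaData R) : Submodule Rᵐᵒᵖ R :=
  ⨆ p : Σ i : Fin H.m, Fin (H.n i),
    radSub^[H.n p.1 - p.2.val] (rightIdeal R (H.e p.1 p.2))

/-- The submodule `T·I` of a right module `T`, for `I` a right ideal of `R`. -/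
def smulSub (I : Submodule Rᵐᵒᵖ R) (T : Type) [AddCommGroup T] [Module Rᵐᵒᵖ T] :
    Submodule Rᵐᵒᵖ T :=
  Submodule.span Rᵐᵒᵖ {x : T | ∃ (t : T) (r : R), r ∈ I ∧ x = op r • t}

/-!
If the endomorphism ring of a projective module `L` is local and a proper submodule `N` of `L`
were not contained in some maximal submodule `Q`, then `N → L ⧸ Q` would be onto, and lifting
`L → L ⧸ Q` through it would give an endomorphism `f` of `L` with range in `N` and with
`range (1 - f) ≤ Q`.  One of `f`, `1 - f` is a unit, so `N` or `Q` is all of `L`, a contradiction.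
Hence every proper submodule of `L` lies in `rad L`.

In the Harada setting `P_{ij} ≅ e_{ij}R` is projective, and its endomorphism ring is local by
Fitting's lemma.  A submodule of `P_{ij}` is therefore `P_{ij}` itself or lies in
`rad P_{ij} = P_{i,j+1}`, and walking down the chain gives the result.
-/

theorem exists_eq_iterate_of_not_le {α : Type*} [LE α] {f : α → α} {a x : α} {n : ℕ}
    (hstep : ∀ j < n, x ≤ f^[j] a → x = f^[j] a ∨ x ≤ f^[j + 1] a)
    (hx : x ≤ a) (hn : ¬ x ≤ f^[n] a) : ∃ j < n, x = f^[j] a := by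
  induction n with
  | zero => exact absurd hx hn
  | succ n ih =>
    by_cases hle : x ≤ f^[n] a
    · exact ⟨n, n.lt_succ_self, (hstep n n.lt_succ_self hle).resolve_right hn⟩
    · obtain ⟨j, hj, hxj⟩ := ih (fun j hj => hstep j (hj.trans n.lt_succ_self)) hle
      exact ⟨j, hj.trans n.lt_succ_self, hxj⟩

section LocalProjective

variable {A L : Type*} [Ring A] [AddCommGroup L] [Module A L]

theorem exists_end_range_le_of_codisjoint [Module.Projective A L] {N Q : Submodule A L}
    (h : Codisjoint Q N) :
    ∃ f : Module.End A L, LinearMap.range f ≤ N ∧ LinearMap.range (1 - f) ≤ Q := by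
  have hsurj : Function.Surjective (Q.mkQ ∘ₗ N.subtype) := by
    rw [← LinearMap.range_eq_top, LinearMap.range_comp, Submodule.range_subtype,
      Submodule.map_mkQ_eq_top]
    exact h.eq_top
  obtain ⟨g, hg⟩ := Module.projective_lifting_property (Q.mkQ ∘ₗ N.subtype) Q.mkQ hsurj
  refine ⟨N.subtype ∘ₗ g, ?_, ?_⟩
  · rintro _ ⟨x, rfl⟩
    exact (g x).2
  · rintro _ ⟨x, rfl⟩
    exact (Submodule.Quotient.eq Q).mp (LinearMap.congr_fun hg x).symm

theorem le_jacobson_of_ne_top [Module.Projective A L] [IsLocalRing (Module.End A L)]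
    {N : Submodule A L} (hN : N ≠ ⊤) : N ≤ Module.jacobson A L := by
  refine le_sInf fun Q (hQ : IsCoatom Q) => ?_
  by_contra hNQ
  obtain ⟨f, hfN, hfQ⟩ :=
    exists_end_range_le_of_codisjoint ((IsCoatom.not_le_iff_codisjoint hQ).mp hNQ)
  have eq_top_of_isUnit {u : Module.End A L} {S : Submodule A L} (hu : IsUnit u)
      (hS : LinearMap.range u ≤ S) : S = ⊤ :=
    top_unique <| (LinearMap.range_eq_top.mpr ((Module.End.isUnit_iff u).mp hu).2).ge.trans hS
  rcases IsLocalRing.isUnit_or_isUnit_of_add_one (add_sub_cancel f 1) with hf | hf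
  · exact hN (eq_top_of_isUnit hf hfN)
  · exact hQ.1 (eq_top_of_isUnit hf hfQ)

theorem projective_range_of_isIdempotentElem [Module.Projective A L] {f : Module.End A L}
    (hf : IsIdempotentElem f) : Module.Projective A (LinearMap.range f) := by
  refine .of_split (LinearMap.range f).subtype f.rangeRestrict ?_
  ext ⟨_, x, rfl⟩
  exact LinearMap.congr_fun hf x

end LocalProjective

section Fitting

variable {A L : Type} [Ring A] [AddCommGroup L] [Module A L] [IsNoetherian A L] [IsArtinian A L]

theorem IsIndecomposableMod.isUnit_or_isNilpotent (hL : IsIndecomposableMod A L)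
    (f : Module.End A L) : IsUnit f ∨ IsNilpotent f := by
  obtain ⟨k, hcompl, hk⟩ := (f.eventually_isCompl_ker_pow_range_pow.and
    (Filter.eventually_ne_atTop 0)).exists
  rcases hL.2 _ _ hcompl with hker | hrange
  · left
    have hrange : LinearMap.range (f ^ k) = ⊤ := by simpa [hker] using hcompl.sup_eq_top
    rw [← isUnit_pow_iff hk, Module.End.isUnit_iff]
    exact ⟨LinearMap.ker_eq_bot.mp hker, LinearMap.range_eq_top.mp hrange⟩
  · exact .inr ⟨k, LinearMap.range_eq_bot.mp hrange⟩

theorem IsIndecomposableMod.isLocalRing_end (hL : IsIndecomposableMod A L) :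
    IsLocalRing (Module.End A L) := by
  have := hL.1
  refine .of_isUnit_or_isUnit_one_sub_self fun f => ?_
  exact (hL.isUnit_or_isNilpotent f).imp_right IsNilpotent.isUnit_one_sub

end Fitting

section RadSub

variable {A M : Type} [Ring A] [AddCommGroup M] [Module A M]

theorem radSub_eq_map_jacobson (N : Submodule A M) :
    radSub N = (Module.jacobson A N).map N.subtype :=
  rfl

theorem nonempty_radSub_equiv {M' : Type} [AddCommGroup M'] [Module A M'] {N : Submodule A M}
    {N' : Submodule A M'} (φ : N ≃ₗ[A] N') : Nonempty (radSub N ≃ₗ[A] radSub N') := by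
  have hφ : (Module.jacobson A N).map φ.toLinearMap = Module.jacobson A N' :=
    Module.map_jacobson_of_bijective φ.bijective
  rw [radSub_eq_map_jacobson, radSub_eq_map_jacobson]
  exact ⟨(Submodule.equivMapOfInjective _ N.injective_subtype _).symm ≪≫ₗ
    φ.submoduleMap (Module.jacobson A N) ≪≫ₗ LinearEquiv.ofEq _ _ hφ ≪≫ₗ
    Submodule.equivMapOfInjective _ N'.injective_subtype _⟩

theorem eq_or_le_radSub {L N : Submodule A M} [Module.Projective A L]
    [IsLocalRing (Module.End A L)] (hN : N ≤ L) : N = L ∨ N ≤ radSub L := by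
  refine or_iff_not_imp_left.mpr fun hne => ?_
  have hproper : N.comap L.subtype ≠ ⊤ := fun htop =>
    hne (hN.antisymm (Submodule.comap_subtype_eq_top.mp htop))
  calc
    N = (N.comap L.subtype).map L.subtype := by
      rw [Submodule.map_comap_subtype, inf_eq_right.mpr hN]
    _ ≤ radSub L := Submodule.map_mono (le_jacobson_of_ne_top hproper)

theorem statement2_general {L N : Submodule A M} {n : ℕ}
    (hproj : ∀ j < n, Module.Projective A ↥(radSub^[j] L))
    (hlocal : ∀ j < n, IsLocalRing (Module.End A ↥(radSub^[j] L)))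
    (hN : N ≤ L) (hrad : ¬ N ≤ radSub^[n] L) : ∃ j < n, N = radSub^[j] L := by
  refine exists_eq_iterate_of_not_le (fun j hj hNj => ?_) hN hrad
  have := hproj j hj
  have := hlocal j hj
  rw [Function.iterate_succ_apply']
  exact eq_or_le_radSub hNj

end RadSub

theorem projective_self_mulOpposite (R : Type*) [Ring R] : Module.Projective Rᵐᵒᵖ R :=
  .of_equiv ({ opAddEquiv.symm with map_smul' := fun _ _ => rfl } : Rᵐᵒᵖ ≃ₗ[Rᵐᵒᵖ] R)

theorem rightIdeal_eq_range (x : R) :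
    rightIdeal R x = LinearMap.range (RingEquiv.moduleEndSelfOp R x) := by
  ext y
  simp [rightIdeal, Submodule.mem_span_singleton, MulOpposite.exists]

theorem projective_rightIdeal {e : R} (he : IsIdempotentElem e) :
    Module.Projective Rᵐᵒᵖ (rightIdeal R e) := by
  have := projective_self_mulOpposite R
  rw [rightIdeal_eq_range]
  exact projective_range_of_isIdempotentElem (he.map (RingEquiv.moduleEndSelfOp R))

namespace HaradaData

variable (H : HaradaData R) (i : Fin H.m)

theorem nonempty_P_equiv_rightIdeal :
    ∀ j : Fin (H.n i), Nonempty (H.P i j ≃ₗ[Rᵐᵒᵖ] rightIdeal R (H.e i j))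
  | ⟨0, _⟩ => ⟨LinearEquiv.refl _ _⟩
  | ⟨j + 1, hj⟩ => by
    obtain ⟨φ⟩ := nonempty_P_equiv_rightIdeal ⟨j, j.lt_succ_self.trans hj⟩
    obtain ⟨radφ⟩ := nonempty_radSub_equiv φ
    obtain ⟨ψ⟩ := H.rad_iso i ⟨j + 1, hj⟩ j.succ_pos
    have hP : H.P i ⟨j + 1, hj⟩ = radSub (H.P i ⟨j, j.lt_succ_self.trans hj⟩) :=
      Function.iterate_succ_apply' _ _ _
    exact ⟨LinearEquiv.ofEq _ _ hP ≪≫ₗ radφ ≪≫ₗ ψ.symm⟩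

theorem projective_P (j : Fin (H.n i)) : Module.Projective Rᵐᵒᵖ (H.P i j) := by
  obtain ⟨φ⟩ := H.nonempty_P_equiv_rightIdeal i j
  have := projective_rightIdeal (H.idem i j)
  exact .of_equiv φ.symm

theorem isLocalRing_end_P [IsNoetherian Rᵐᵒᵖ R] [IsArtinian Rᵐᵒᵖ R] (j : Fin (H.n i)) :
    IsLocalRing (Module.End Rᵐᵒᵖ (H.P i j)) := by
  obtain ⟨φ⟩ := H.nonempty_P_equiv_rightIdeal i j
  have := (H.indec i j).isLocalRing_end
  exact (RingHomClass.toRingHom φ.conjRingEquiv).domain_isLocalRing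

theorem radSub_P_last :
    radSub (H.P i (H.last i)) = radSub^[H.n i] (rightIdeal R (H.e i ⟨0, H.hn i⟩)) := by
  have hlast : (H.last i).val + 1 = H.n i := Nat.sub_add_cancel (H.hn i)
  rw [P, ← Function.iterate_succ_apply' radSub, Nat.succ_eq_add_one, hlast]

end HaradaData

/-- Lemma 2.1 of the paper.  If a submodule of `P_{i1}` is not contained in
`rad(P_{i n_i})`, then it is `P_{ij}` for some `1 ≤ j ≤ n_i`. -/
theorem statement2 (K R : Type) [Field K] [IsAlgClosed K] [Ring R] [Algebra K R]
    [FiniteDimensional K R] (H : HaradaData R) (i : Fin H.m)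
    (N : Submodule Rᵐᵒᵖ R) (hN : N ≤ H.P i ⟨0, H.hn i⟩)
    (hrad : ¬ N ≤ radSub (H.P i (H.last i))) :
    ∃ j : Fin (H.n i), N = H.P i j := by
  have : IsNoetherian Rᵐᵒᵖ R := isNoetherian_of_tower K inferInstance
  have : IsArtinian Rᵐᵒᵖ R := isArtinian_of_tower K inferInstance
  rw [H.radSub_P_last] at hrad
  obtain ⟨j, hj, hNj⟩ := statement2_general (fun j hj => H.projective_P i ⟨j, hj⟩)
    (fun j hj => H.isLocalRing_end_P i ⟨j, hj⟩) hN hrad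
  exact ⟨⟨j, hj⟩, hNj⟩
end

section
/- Let R be a basic left Harada algebra with modules P_{ij} := rad^{j-1}(e_{i1}R) as below, and let f : P_{ij} → P_{il} be an injective homomorphism of right R-modules with j ≥ l. Then for every homomorphism g : P_{ij} → P_{il'} with l ≥ l', there exists a homomorphism h : P_{il} → P_{il'} such that g = h ∘ f. -/
/-!
Common setup.  `K` is an algebraically closed field and `R` a finite-dimensional associative
unital `K`-algebra.  Right `R`-modules are formalized as modules over the opposite ring `Rᵐᵒᵖ`
(so that `MulOpposite.op r • x = x * r`).
-/

open MulOpposite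

variable {R : Type} [Ring R]

/-!
Put `E = e_{i1}R`. Since `E` is injective, `g` extends along the monomorphism
`P_{ij} → P_{il} ⊆ E` to an endomorphism `φ` of `E`. The radical is functorial, so `φ` maps
`P_{il} = rad^{l-1} E` into itself, hence into `P_{il'}`, and `h` is the restriction of `φ`.
-/

section Radical

variable {A M M' : Type} [Ring A] [AddCommGroup M] [Module A M] [AddCommGroup M'] [Module A M']

theorem radSub_le (N : Submodule A M) : radSub N ≤ N :=
  Submodule.map_subtype_le _ _

theorem antitone_iterate_radSub (N : Submodule A M) : Antitone fun k : ℕ => radSub^[k] N :=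
  fun _ _ hkl => Function.antitone_iterate_of_le_id radSub_le hkl N

theorem map_mem_radSub {N : Submodule A M} {N' : Submodule A M'} (φ : N →ₗ[A] N') {x : N}
    (hx : (x : M) ∈ radSub N) : (φ x : M') ∈ radSub N' := by
  have hx_jacobson : x ∈ Module.jacobson A N := by
    obtain ⟨y, hy, hyx⟩ := hx
    exact Subtype.ext hyx ▸ hy
  exact Submodule.mem_map_of_mem (Module.le_comap_jacobson φ hx_jacobson)

theorem map_mem_iterate_radSub (k : ℕ) {N : Submodule A M} {N' : Submodule A M'}
    (φ : N →ₗ[A] N') {x : N} (hx : (x : M) ∈ radSub^[k] N) : (φ x : M') ∈ radSub^[k] N' := by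
  induction k generalizing N N' with
  | zero => exact (φ x).2
  | succ k ih =>
    let φ_rad : radSub N →ₗ[A] radSub N' :=
      (N'.subtype ∘ₗ φ ∘ₗ Submodule.inclusion (radSub_le N)).codRestrict (radSub N')
        fun y => map_mem_radSub φ y.2
    have hx_rad : (x : M) ∈ radSub N := antitone_iterate_radSub (radSub N) k.zero_le hx
    exact ih φ_rad (x := ⟨x, hx_rad⟩) hx

theorem statement5_general (E : Submodule A M) [Module.Injective A E] {j l l' : ℕ}
    (f : ↥(radSub^[j] E) →ₗ[A] ↥(radSub^[l] E)) (hf : Function.Injective f)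
    (g : ↥(radSub^[j] E) →ₗ[A] ↥(radSub^[l'] E)) (hl' : l' ≤ l) :
    ∃ h : ↥(radSub^[l] E) →ₗ[A] ↥(radSub^[l'] E), g = h.comp f := by
  have iterate_le (k : ℕ) : radSub^[k] E ≤ E := antitone_iterate_radSub E k.zero_le
  let ι (k : ℕ) : ↥(radSub^[k] E) →ₗ[A] E := Submodule.inclusion (iterate_le k)
  have ιf_injective : Function.Injective (ι l ∘ₗ f) :=
    (Submodule.inclusion_injective (iterate_le l)).comp hf
  obtain ⟨φ, hφ⟩ : ∃ φ : E →ₗ[A] E, ∀ x, φ (ι l (f x)) = ι l' (g x) :=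
    Module.Injective.out (ι l ∘ₗ f) ιf_injective (ι l' ∘ₗ g)
  have φ_mem (x : ↥(radSub^[l] E)) : (φ (ι l x) : M) ∈ radSub^[l'] E :=
    antitone_iterate_radSub E hl' (map_mem_iterate_radSub l φ x.2)
  refine ⟨(E.subtype ∘ₗ φ ∘ₗ ι l).codRestrict _ φ_mem, ?_⟩
  ext x
  exact congrArg (fun y : E => (y : M)) (hφ x).symm

end Radical

/-- Lemma 2.3(1).  Let `f : P_{ij} → P_{il}` be injective, `j ≥ l`.  Every
`g : P_{ij} → P_{il'}` with `l ≥ l'` factors as `g = h ∘ f`. -/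
theorem statement5 (K R : Type) [Field K] [IsAlgClosed K] [Ring R] [Algebra K R]
    [FiniteDimensional K R] (H : HaradaData R) (i : Fin H.m) (j l l' : Fin (H.n i))
    (f : ↥(H.P i j) →ₗ[Rᵐᵒᵖ] ↥(H.P i l)) (hf : Function.Injective f) (hjl : l ≤ j)
    (g : ↥(H.P i j) →ₗ[Rᵐᵒᵖ] ↥(H.P i l')) (hl' : l' ≤ l) :
    ∃ h : ↥(H.P i l) →ₗ[Rᵐᵒᵖ] ↥(H.P i l'), g = h.comp f := by
  have := H.inj i
  exact statement5_general (rightIdeal R (H.e i ⟨0, H.hn i⟩)) f hf g hl'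
end
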